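/- arXiv:1710.08353 — 3 statements merged into one kernel-verified Lean document; each statement's English description precedes it below -/
import Mathlib

section
/- Let k ≥ 2 be a natural number and let S be a non-sparse k-automatic subset of ℕ with gcd(S) = 1, and suppose a deterministic finite automaton with m states accepts the language of base-k expansions of the elements of S. Then every natural number n ≥ 3·k^{16m+5} can be expressed as a sum of at most 5·k^{16m+3} elements of S. -/
/-- `n` can be written as a sum of at least one and at most `N` elements of `S`
(repetitions allowed). -/
def SumOfAtMost (S : Set ℕ) (N n : ℕ) : Prop :=
  ∃ l : List ℕ, l ≠ [] ∧ l.length ≤ N ∧ (∀ x ∈ l, x ∈ S) ∧ l.sum = n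

/-- `π_S(x) = #{n ≤ x : n ∈ S}`. -/
noncomputable def piCount (S : Set ℕ) (x : ℕ) : ℕ :=
  Set.ncard {n | n ∈ S ∧ n ≤ x}

/-- `S` is sparse if `π_S(x) = O((log x)^d)` for some natural number `d`. -/
def IsSparse (S : Set ℕ) : Prop :=
  ∃ d : ℕ, ∃ C : ℝ, 0 < C ∧ ∃ x0 : ℕ, ∀ x : ℕ, x0 ≤ x →
    (piCount S x : ℝ) ≤ C * (Real.log x) ^ d

/-- `S ⊆ ℕ` is `k`-automatic: some DFA over the alphabet `{0, …, k-1}` accepts exactly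
the base-`k` expansions (least-significant digit first, without leading zeros)
of the elements of `S`. -/
def IsKAutomatic (k : ℕ) (S : Set ℕ) : Prop :=
  ∃ (m : ℕ) (M : DFA (Fin k) (Fin m)),
    ∀ w : List (Fin k), w ∈ M.accepts ↔ ∃ s ∈ S, w.map Fin.val = Nat.digits k s

/-!
Let `M` have `m` states and write `X = k ^ m`.

An accepted word of length at least `2 * m` factors as `x y z s t` so that it is still accepted when
`y`, `s` or both are deleted, and the values of these words satisfy
`val (xyzst) + k ^ |y| * val (xzt) = val (xyzt) + k ^ |y| * val (xzst)`.
Hence a common divisor of the elements of `S` below `X ^ 2` divides all of `S`, so these elements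
already have gcd `1`, and every residue class modulo `E` contains a sum of fewer than `E` of them.

If no state on an accepting path admitted two return words with different first letters, an accepted
word would be determined by the time of the last visit to each state and the letter read there, so
that `S` would be sparse. So some such state `q` has two loops of equal length, with values
`α > β`. Put `K = k ^ length`. The set `P` of values accepted from `q` is then closed under
`x ↦ α + K * x` and `x ↦ β + K * x`. Writing `j < K ^ n` in base `K`, a digit `r` is realised by
sending `r` of `K - 1` summands through the first map and the others through the second; so the
`(K - 1)`-fold sums of elements of `P` contain progressions of length `K ^ n` and difference
`α - β`, whose first term has order `K ^ n`. Prefixing a word `u` leading to `q` gives progressions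
with difference `E = k ^ |u| * (α - β)` in the sums of elements of `S`, and adding up boundedly many
copies of them yields all large multiples of `E`.
-/

section Words

variable {α σ : Type*} [Fintype σ]

theorem exists_sublist_length_lt_card_foldl_eq (f : σ → α → σ) (s : σ) (w : List α) :
    ∃ w' : List α, w'.Sublist w ∧ w'.length < Fintype.card σ ∧ w'.foldl f s = w.foldl f s := by
  induction hn : w.length using Nat.strong_induction_on generalizing w with
  | _ n ih =>
    rcases lt_or_ge w.length (Fintype.card σ) with hlt | hge
    · exact ⟨w, .refl w, hlt, rfl⟩
    · obtain ⟨q, x, y, z, rfl, -, hy, hx, -, hz⟩ :=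
        (DFA.mk f s ∅).evalFrom_split (s := s) hge rfl
      have hshorter : (x ++ z).length < n := by
        have := List.length_pos_iff.2 hy
        simp only [List.length_append] at hn ⊢
        omega
      obtain ⟨w', hsub, hlt, heval⟩ := ih _ hshorter (x ++ z) rfl
      have hskip : (x ++ z).foldl f s = (x ++ y ++ z).foldl f s := by
        calc (x ++ z).foldl f s = z.foldl f q := by rw [List.foldl_append, ← hx, DFA.evalFrom]
          _ = (x ++ y ++ z).foldl f s := hz
      exact ⟨w', hsub.trans (by simp), hlt, heval.trans hskip⟩

theorem exists_two_removable_factors (M : DFA α σ) {w : List α} (hw : w ∈ M.accepts)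
    (hlen : 2 * Fintype.card σ ≤ w.length) :
    ∃ x y z s t : List α, w = x ++ y ++ z ++ s ++ t ∧ y ≠ [] ∧ s ≠ [] ∧
      x ++ z ++ t ∈ M.accepts ∧ x ++ y ++ z ++ t ∈ M.accepts ∧ x ++ z ++ s ++ t ∈ M.accepts := by
  obtain ⟨p, x, y, r, rfl, hxy, hy, hxp, hyp, hr⟩ :=
    M.evalFrom_split (s := M.start) (x := w) (by omega) rfl
  have hr_len : Fintype.card σ ≤ r.length := by
    simp only [List.length_append] at hlen
    omega
  obtain ⟨q, z, s, t, rfl, -, hs, hzq, hsq, ht⟩ := M.evalFrom_split hr_len hr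
  have hacc : M.evalFrom q t ∈ M.accept := ht ▸ hw
  refine ⟨x, y, z, s, t, by simp, hy, hs, ?_, ?_, ?_⟩ <;>
    simpa only [DFA.mem_accepts, DFA.eval, DFA.evalFrom_of_append, hxp, hyp, hzq, hsq] using hacc

end Words

section Expansions

variable {k : ℕ} {σ : Type*}

/-- The natural number with base-`k` digits `w`, least significant digit first; the word may end
in zeros. -/
def wordValue (w : List (Fin k)) : ℕ :=
  Nat.ofDigits k (w.map Fin.val)

theorem wordValue_append (x y : List (Fin k)) :
    wordValue (x ++ y) = wordValue x + k ^ x.length * wordValue y := by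
  simp [wordValue, Nat.ofDigits_append]

theorem wordValue_cons_mod (c : Fin k) (w : List (Fin k)) : wordValue (c :: w) % k = c := by
  simp [wordValue, Nat.ofDigits_cons, Nat.mod_eq_of_lt c.isLt]

theorem wordValue_lt (hk : 1 < k) (w : List (Fin k)) : wordValue w < k ^ w.length := by
  have hdigits : ∀ d ∈ w.map Fin.val, d < k := by
    simp only [List.forall_mem_map, Fin.is_lt, implies_true]
  simpa [wordValue] using Nat.ofDigits_lt_base_pow_length hk hdigits

/-- `M` recognizes `S` in the sense of `IsKAutomatic`: it accepts exactly the base-`k` expansions of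
the elements of `S`, so no accepted word ends in the digit `0`. -/
def RecognizesDigits (M : DFA (Fin k) σ) (S : Set ℕ) : Prop :=
  ∀ w : List (Fin k), w ∈ M.accepts ↔ ∃ s ∈ S, w.map Fin.val = Nat.digits k s

variable {M : DFA (Fin k) σ} {S : Set ℕ}

theorem RecognizesDigits.wordValue_mem (hM : RecognizesDigits M S) {w : List (Fin k)}
    (hw : w ∈ M.accepts) : wordValue w ∈ S := by
  obtain ⟨s, hs, hws⟩ := (hM w).1 hw
  rwa [wordValue, hws, Nat.ofDigits_digits]

theorem RecognizesDigits.exists_word (hk : 1 < k) (hM : RecognizesDigits M S) {s : ℕ}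
    (hs : s ∈ S) :
    ∃ w ∈ M.accepts, w.length = (Nat.digits k s).length ∧ wordValue w = s := by
  obtain ⟨w, hw⟩ : Nat.digits k s ∈ Set.range (List.map (Fin.val : Fin k → ℕ)) := by
    rw [Set.range_list_map]
    exact fun d hd => ⟨⟨d, Nat.digits_lt_base hk hd⟩, rfl⟩
  exact ⟨w, (hM w).2 ⟨s, hs, hw⟩, by rw [← hw, List.length_map],
    by rw [wordValue, hw, Nat.ofDigits_digits]⟩

end Expansions

section ShortElements

variable {k : ℕ} {σ : Type*} [Fintype σ]

-- Inserting `s` before `t` changes the value by an amount that only depends on `s`, `t` and the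
-- length of what comes before, so removing `y` divides this amount by `k ^ y.length`.
theorem wordValue_insert_insert (x y z s t : List (Fin k)) :
    wordValue (x ++ y ++ z ++ s ++ t) + k ^ y.length * wordValue (x ++ z ++ t) =
      wordValue (x ++ y ++ z ++ t) + k ^ y.length * wordValue (x ++ z ++ s ++ t) := by
  simp only [wordValue_append, List.length_append, pow_add]
  ring

theorem dvd_wordValue_of_forall_short (M : DFA (Fin k) σ) {d : ℕ}
    (h : ∀ w ∈ M.accepts, w.length < 2 * Fintype.card σ → d ∣ wordValue w) {w : List (Fin k)}
    (hw : w ∈ M.accepts) : d ∣ wordValue w := by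
  induction hn : w.length using Nat.strong_induction_on generalizing w with
  | _ n ih =>
    rcases lt_or_ge w.length (2 * Fintype.card σ) with hlt | hge
    · exact h w hw hlt
    · obtain ⟨x, y, z, s, t, rfl, hy, hs, hxzt, hxyzt, hxzst⟩ :=
        exists_two_removable_factors M hw hge
      have hy_pos := List.length_pos_iff.2 hy
      have hs_pos := List.length_pos_iff.2 hs
      simp only [List.length_append] at hn
      have hd₁ := ih _ (by simp only [List.length_append]; omega) hxzt rfl
      have hd₂ := ih _ (by simp only [List.length_append]; omega) hxyzt rfl
      have hd₃ := ih _ (by simp only [List.length_append]; omega) hxzst rfl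
      rw [← Nat.dvd_add_left (hd₁.mul_left (k ^ y.length)), wordValue_insert_insert]
      exact hd₂.add (hd₃.mul_left _)

theorem RecognizesDigits.setGcd_lt_pow_eq (hk : 1 < k) {M : DFA (Fin k) σ} {S : Set ℕ}
    (hM : RecognizesDigits M S) :
    Nat.setGcd {s ∈ S | s < k ^ (2 * Fintype.card σ)} = Nat.setGcd S := by
  refine Nat.dvd_antisymm (Nat.dvd_setGcd_iff.2 fun s hs => ?_) (Nat.setGcd_mono fun s hs => hs.1)
  obtain ⟨w, hw, -, rfl⟩ := hM.exists_word hk hs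
  refine dvd_wordValue_of_forall_short M (fun w' hw' hlt => ?_) hw
  exact Nat.setGcd_dvd_of_mem
    ⟨hM.wordValue_mem hw', (wordValue_lt hk w').trans (Nat.pow_lt_pow_right hk hlt)⟩

end ShortElements

section SumOfExactly

/-- `n` is a sum of exactly `N` elements of `S`, i.e. lies in the `N`-fold sumset of `S`. Unlike
`SumOfAtMost`, this is additive in `(N, n)`, and the empty sum is allowed. -/
def SumOfExactly (S : Set ℕ) (N n : ℕ) : Prop :=
  ∃ l : List ℕ, l.length = N ∧ (∀ x ∈ l, x ∈ S) ∧ l.sum = n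

variable {S T : Set ℕ} {N N' n n' : ℕ}

theorem SumOfExactly.zero (S : Set ℕ) : SumOfExactly S 0 0 :=
  ⟨[], rfl, by simp, rfl⟩

theorem SumOfExactly.nsmul_of_mem (h : n ∈ S) (N : ℕ) : SumOfExactly S N (N * n) :=
  ⟨List.replicate N n, by simp, by simp +contextual [h], by simp⟩

theorem SumOfExactly.add (h : SumOfExactly S N n) (h' : SumOfExactly S N' n') :
    SumOfExactly S (N + N') (n + n') := by
  obtain ⟨l, rfl, hl, rfl⟩ := h
  obtain ⟨l', rfl, hl', rfl⟩ := h'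
  exact ⟨l ++ l', List.length_append, List.forall_mem_append.2 ⟨hl, hl'⟩, List.sum_append⟩

theorem SumOfExactly.exists_add_eq (h : SumOfExactly S (N + N') n) :
    ∃ x x', x + x' = n ∧ SumOfExactly S N x ∧ SumOfExactly S N' x' := by
  obtain ⟨l, hlen, hl, rfl⟩ := h
  exact ⟨(l.take N).sum, (l.drop N).sum, List.sum_take_add_sum_drop l N,
    ⟨l.take N, by simp [hlen], fun x hx => hl x (List.mem_of_mem_take hx), rfl⟩,
    ⟨l.drop N, by simp [hlen], fun x hx => hl x (List.mem_of_mem_drop hx), rfl⟩⟩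

theorem SumOfExactly.affine {a b : ℕ} (hST : ∀ x ∈ S, a + b * x ∈ T) (h : SumOfExactly S N n) :
    SumOfExactly T N (N * a + b * n) := by
  obtain ⟨l, rfl, hl, rfl⟩ := h
  exact ⟨l.map fun x => a + b * x, by simp, List.forall_mem_map.2 fun x hx => hST x (hl x hx),
    by rw [List.sum_map_add, List.sum_map_mul_left, List.map_id']; simp⟩

theorem SumOfExactly.mono_set (h : SumOfExactly S N n) (hST : S ⊆ T) : SumOfExactly T N n := by
  obtain ⟨l, hlen, hl, hsum⟩ := h
  exact ⟨l, hlen, fun x hx => hST (hl x hx), hsum⟩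

theorem SumOfExactly.sumOfAtMost (h : SumOfExactly S N n) (hn : n ≠ 0) (hN : N ≤ N') :
    SumOfAtMost S N' n := by
  obtain ⟨l, rfl, hl, rfl⟩ := h
  exact ⟨l, by rintro rfl; exact hn rfl, hN, hl, rfl⟩

theorem SumOfAtMost.mono (h : SumOfAtMost S N n) (hN : N ≤ N') : SumOfAtMost S N' n := by
  obtain ⟨l, hne, hlen, hl, hsum⟩ := h
  exact ⟨l, hne, hlen.trans hN, hl, hsum⟩

theorem exists_sumOfExactly_modEq_of_forall_le {B E : ℕ} (hgcd : Nat.setGcd S = 1)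
    (hB : ∀ x ∈ S, x ≤ B) (hE : 0 < E) (n : ℕ) :
    ∃ N < E, ∃ r ≤ N * B, SumOfExactly S N r ∧ r ≡ n [MOD E] := by
  obtain ⟨n₀, hn₀⟩ := Nat.exists_mem_closure_of_ge S
  have hmem : n + E * n₀ ∈ AddSubmonoid.closure S :=
    hn₀ _ ((Nat.le_mul_of_pos_left n₀ hE).trans (Nat.le_add_left _ _)) (by simp [hgcd])
  obtain ⟨l, hlS, hl⟩ := AddSubmonoid.exists_list_of_mem_closure hmem
  -- Shortening a list of summands modulo `E` is shortening a path in the automaton `ZMod E`.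
  have : NeZero E := ⟨hE.ne'⟩
  obtain ⟨l', hsub, hlt, heq⟩ :=
    exists_sublist_length_lt_card_foldl_eq (fun (z : ZMod E) (x : ℕ) => z + x) 0 l
  have hfoldl (w : List ℕ) : w.foldl (fun (z : ZMod E) (x : ℕ) => z + x) 0 = (w.sum : ZMod E) := by
    rw [Nat.cast_list_sum, List.sum_eq_foldl, List.foldl_map]
  have hl'S : ∀ x ∈ l', x ∈ S := fun x hx => hlS x (hsub.mem hx)
  refine ⟨l'.length, by simpa using hlt, l'.sum, ?_, ⟨l', rfl, hl'S, rfl⟩, ?_⟩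
  · simpa using List.sum_le_card_nsmul l' B fun x hx => hB x (hl'S x hx)
  · rw [← ZMod.natCast_eq_natCast_iff, ← hfoldl, heq, hfoldl, hl]
    simp

end SumOfExactly

section Branching

variable {α σ : Type*}

/-- `M` branches at the state `q` if two words starting with different letters both lead from `q`
back to `q`. An automaton accepts only polynomially many words of length at most `N` if it branches
at no state on an accepting path. -/
def BranchesAt (M : DFA α σ) (q : σ) : Prop :=
  ∃ c d x y, c ≠ d ∧ M.evalFrom q (c :: x) = q ∧ M.evalFrom q (d :: y) = q

open scoped Classical in
/-- The largest time `t ≤ w.length` at which the run of `M` on `w` is in the state `q`, and `0` if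
that run never visits `q`. These times, with the letters read at them, encode the accepted words of
an automaton that does not branch. -/
noncomputable def lastVisit (M : DFA α σ) (w : List α) (q : σ) : ℕ :=
  Nat.findGreatest (fun t => M.eval (w.take t) = q) w.length

variable {M : DFA α σ} {w w' : List α}

theorem lastVisit_le_length (M : DFA α σ) (w : List α) (q : σ) : lastVisit M w q ≤ w.length := by
  classical exact Nat.findGreatest_le _

theorem le_lastVisit {t : ℕ} (ht : t ≤ w.length) : t ≤ lastVisit M w (M.eval (w.take t)) := by
  classical exact Nat.le_findGreatest ht rfl

theorem eval_take_lastVisit {t : ℕ} (ht : t ≤ w.length) :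
    M.eval (w.take (lastVisit M w (M.eval (w.take t)))) = M.eval (w.take t) := by
  classical
  exact Nat.findGreatest_spec (P := fun t' => M.eval (w.take t') = M.eval (w.take t)) ht rfl

theorem exists_loop_of_lt_lastVisit {t : ℕ} (ht : t < lastVisit M w (M.eval (w.take t))) :
    ∃ c x, w[t]? = some c ∧ M.evalFrom (M.eval (w.take t)) (c :: x) = M.eval (w.take t) := by
  set q := M.eval (w.take t)
  set T := lastVisit M w q
  have htlen : t < w.length := ht.trans_le (lastVisit_le_length M w q)
  have hTq : M.eval (w.take T) = q := eval_take_lastVisit htlen.le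
  have hsplit : w.take T = w.take t ++ w[t] :: (w.take T).drop (t + 1) := by
    calc w.take T = (w.take T).take (t + 1) ++ (w.take T).drop (t + 1) :=
          (List.take_append_drop ..).symm
      _ = w.take t ++ w[t] :: (w.take T).drop (t + 1) := by
        rw [List.take_take, min_eq_left ht, List.take_succ_eq_append_getElem htlen,
          List.append_assoc, List.singleton_append]
  refine ⟨w[t], (w.take T).drop (t + 1), List.getElem?_eq_getElem htlen, ?_⟩
  rw [hsplit, DFA.eval, DFA.evalFrom_of_append] at hTq
  exact hTq

theorem getElem?_eq_of_lastVisit_eq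
    (hM : ∀ u v, u ++ v ∈ M.accepts → ¬ BranchesAt M (M.eval u)) (hw : w ∈ M.accepts)
    (hvisit : ∀ q, lastVisit M w q = lastVisit M w' q)
    (hletter : ∀ q, w[lastVisit M w q]? = w'[lastVisit M w' q]?)
    {t : ℕ} (htake : w.take t = w'.take t) : w[t]? = w'[t]? := by
  have hlen : min t w.length = min t w'.length := by
    simpa only [List.length_take] using congrArg List.length htake
  rcases lt_or_ge w.length t with hlt | hge
  · rw [List.getElem?_eq_none (by omega), List.getElem?_eq_none (by omega)]
  · have hle : t ≤ lastVisit M w (M.eval (w.take t)) := le_lastVisit hge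
    rcases hle.eq_or_lt with heq | hlt
    · rw [heq, hletter, ← hvisit]
    · obtain ⟨c, x, hc, hx⟩ := exists_loop_of_lt_lastVisit hlt
      rw [hvisit, htake] at hlt
      obtain ⟨d, y, hd, hy⟩ := exists_loop_of_lt_lastVisit hlt
      rw [← htake] at hy
      by_contra hne
      refine hM (w.take t) (w.drop t) (by rwa [List.take_append_drop])
        ⟨c, d, x, y, fun hcd => hne ?_, hx, hy⟩
      rw [hc, hd, hcd]

theorem eq_of_lastVisit_eq
    (hM : ∀ u v, u ++ v ∈ M.accepts → ¬ BranchesAt M (M.eval u)) (hw : w ∈ M.accepts)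
    (hvisit : ∀ q, lastVisit M w q = lastVisit M w' q)
    (hletter : ∀ q, w[lastVisit M w q]? = w'[lastVisit M w' q]?) : w = w' := by
  have htake (t : ℕ) : w.take t = w'.take t := by
    induction t with
    | zero => simp
    | succ t ih =>
      rw [List.take_add_one, List.take_add_one, ih,
        getElem?_eq_of_lastVisit_eq hM hw hvisit hletter ih]
  exact List.ext_getElem? fun t => getElem?_eq_of_lastVisit_eq hM hw hvisit hletter (htake t)

theorem ncard_accepts_length_le [Fintype α] [Fintype σ]
    (hM : ∀ u v, u ++ v ∈ M.accepts → ¬ BranchesAt M (M.eval u)) (N : ℕ) :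
    {w | w ∈ M.accepts ∧ w.length ≤ N}.ncard ≤
      ((N + 1) * (Fintype.card α + 1)) ^ Fintype.card σ := by
  classical
  let code (w : List α) (q : σ) : ℕ × Option α := (lastVisit M w q, w[lastVisit M w q]?)
  let codes : Finset (σ → ℕ × Option α) :=
    Fintype.piFinset fun _ => Finset.range (N + 1) ×ˢ Finset.univ
  have hmaps : ∀ w ∈ {w | w ∈ M.accepts ∧ w.length ≤ N}, code w ∈ (codes : Set _) := by
    rintro w ⟨-, hlen⟩
    have hvisit (q : σ) : lastVisit M w q < N + 1 :=
      Nat.lt_succ_of_le ((lastVisit_le_length M w q).trans hlen)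
    simp [codes, code, hvisit]
  have hinj : Set.InjOn code {w | w ∈ M.accepts ∧ w.length ≤ N} := by
    rintro w ⟨hw, -⟩ w' - hcode
    exact eq_of_lastVisit_eq hM hw (fun q => congrArg Prod.fst (congrFun hcode q))
      fun q => congrArg Prod.snd (congrFun hcode q)
  calc {w | w ∈ M.accepts ∧ w.length ≤ N}.ncard
      ≤ (codes : Set _).ncard := Set.ncard_le_ncard_of_injOn code hmaps hinj
    _ = ((N + 1) * (Fintype.card α + 1)) ^ Fintype.card σ := by
      rw [Set.ncard_coe_finset]
      simp [codes]

end Branching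

section Sparse

variable {k : ℕ} {σ : Type*} {M : DFA (Fin k) σ} {S : Set ℕ}

theorem RecognizesDigits.piCount_le [Fintype σ] (hk : 1 < k) (hM : RecognizesDigits M S)
    (hbranch : ∀ u v, u ++ v ∈ M.accepts → ¬ BranchesAt M (M.eval u)) (x : ℕ) :
    piCount S x ≤ ((Nat.log k x + 2) * (k + 1)) ^ Fintype.card σ := by
  classical
  set words := {w | w ∈ M.accepts ∧ w.length ≤ Nat.log k x + 1}
  have hfin : words.Finite := (List.finite_length_le (Fin k) _).subset fun w hw => hw.2
  have hsub : {n | n ∈ S ∧ n ≤ x} ⊆ wordValue '' words := by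
    rintro n ⟨hn, hnx⟩
    obtain ⟨w, hw, hlen, rfl⟩ := hM.exists_word hk hn
    refine ⟨w, ⟨hw, ?_⟩, rfl⟩
    rw [hlen, Nat.digits_length_le_iff hk]
    exact hnx.trans_lt (Nat.lt_pow_succ_log_self hk x)
  calc piCount S x ≤ (wordValue '' words).ncard := Set.ncard_le_ncard hsub (hfin.image _)
    _ ≤ words.ncard := Set.ncard_image_le hfin
    _ ≤ ((Nat.log k x + 2) * (k + 1)) ^ Fintype.card σ := by
      simpa using ncard_accepts_length_le hbranch (Nat.log k x + 1)

theorem natLog_le_two_mul_log (hk : 1 < k) (x : ℕ) : (Nat.log k x : ℝ) ≤ 2 * Real.log x := by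
  have hmono : (Nat.log k x : ℝ) ≤ Nat.log 2 x := by exact_mod_cast Nat.log_anti_left one_lt_two hk
  have hlogb : (Nat.log 2 x : ℝ) ≤ Real.log x / Real.log 2 := by
    simpa [Real.logb] using Real.natLog_le_logb x 2
  have hlog_two : 1 / 2 ≤ Real.log 2 := by linarith [Real.log_two_gt_d9]
  have hdiv : Real.log x / Real.log 2 ≤ Real.log x / (1 / 2) :=
    div_le_div_of_nonneg_left (Real.log_natCast_nonneg x) (by norm_num) hlog_two
  linarith

theorem RecognizesDigits.isSparse [Finite σ] (hk : 1 < k) (hM : RecognizesDigits M S)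
    (hbranch : ∀ u v, u ++ v ∈ M.accepts → ¬ BranchesAt M (M.eval u)) : IsSparse S := by
  have := Fintype.ofFinite σ
  refine ⟨Fintype.card σ, (4 * (k + 1)) ^ Fintype.card σ, by positivity, 3, fun x hx => ?_⟩
  have hlog : 1 ≤ Real.log x := by
    rw [Real.le_log_iff_exp_le (by positivity)]
    exact Real.exp_one_lt_three.le.trans (by exact_mod_cast hx)
  have hbase : (Nat.log k x + 2 : ℝ) ≤ 4 * Real.log x := by
    linarith [natLog_le_two_mul_log hk x]
  calc (piCount S x : ℝ) ≤ ((Nat.log k x + 2) * (k + 1)) ^ Fintype.card σ := by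
        exact_mod_cast hM.piCount_le hk hbranch x
    _ ≤ (4 * Real.log x * (k + 1)) ^ Fintype.card σ := by gcongr
    _ = (4 * (k + 1)) ^ Fintype.card σ * Real.log x ^ Fintype.card σ := by
        rw [← mul_pow, mul_right_comm]

end Sparse

section Progressions

theorem SumOfExactly.of_affine_closed {P : Set ℕ} {α β N p : ℕ}
    (hα : ∀ x ∈ P, α + (N + 1) * x ∈ P) (hβ : ∀ x ∈ P, β + (N + 1) * x ∈ P) (hp : p ∈ P)
    {n i j : ℕ} (hij : i + j + 1 = (N + 1) ^ n) :
    SumOfExactly P N (N * ((N + 1) ^ n * p) + (β * i + α * j)) := by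
  induction n generalizing i j with
  | zero =>
    obtain ⟨rfl, rfl⟩ : i = 0 ∧ j = 0 := by simpa using hij
    simpa using SumOfExactly.nsmul_of_mem hp N
  | succ n ih =>
    -- The last digit `r` of `j` says how many of the `N` summands pass through the `α` map.
    obtain ⟨j', r, hr, rfl⟩ : ∃ j' r, r < N + 1 ∧ j = (N + 1) * j' + r :=
      ⟨j / (N + 1), j % (N + 1), Nat.mod_lt _ N.succ_pos, (Nat.div_add_mod ..).symm⟩
    obtain ⟨s, rfl⟩ : ∃ s, N = r + s := Nat.exists_eq_add_of_le (Nat.le_of_lt_succ hr)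
    have hj' : j' < (r + s + 1) ^ n := by
      refine Nat.lt_of_mul_lt_mul_left (a := r + s + 1) ?_
      rw [← pow_succ']
      omega
    obtain ⟨i', hi'⟩ := Nat.exists_eq_add_of_lt hj'
    obtain rfl : i = (r + s + 1) * i' + s := by
      rw [pow_succ, hi'] at hij
      linarith
    obtain ⟨x, x', hsum, hx, hx'⟩ := (ih (i := i') (j := j') (by omega)).exists_add_eq
    convert (hx.affine hα).add (hx'.affine hβ) using 1
    rw [add_add_add_comm, ← mul_add, hsum]
    ring

theorem SumOfExactly.progression_mul {S : Set ℕ} {B E J N : ℕ}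
    (h : ∀ j ≤ J, SumOfExactly S N (B + E * j)) (t : ℕ) {j : ℕ} (hj : j ≤ t * J) :
    SumOfExactly S (t * N) (t * B + E * j) := by
  induction t generalizing j with
  | zero =>
    obtain rfl : j = 0 := by simpa using hj
    simpa using SumOfExactly.zero S
  | succ t ih =>
    rw [add_one_mul] at hj
    obtain ⟨i, i', hi, hi', rfl⟩ : ∃ i i', i ≤ t * J ∧ i' ≤ J ∧ i + i' = j :=
      ⟨min j (t * J), j - min j (t * J), by omega, by omega, by omega⟩
    convert (ih hi).add (h i' hi') using 1 <;> ring

theorem exists_mul_pow_le_lt_mul_pow_succ {D K y : ℕ} (hK : 1 < K) (hD : 0 < D) (hy : D * K ≤ y) :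
    ∃ n, n ≠ 0 ∧ D * K ^ n ≤ y ∧ y < D * K ^ (n + 1) := by
  have hKy : K ≤ y / D := (Nat.le_div_iff_mul_le hD).2 (by rwa [mul_comm])
  refine ⟨Nat.log K (y / D), (Nat.log_pos hK hKy).ne', ?_, ?_⟩
  · rw [mul_comm, ← Nat.le_div_iff_mul_le hD]
    exact Nat.pow_log_le_self K (by omega)
  · rw [mul_comm, ← Nat.div_lt_iff_lt_mul hD]
    exact Nat.lt_pow_succ_log_self hK _

theorem exists_sumOfExactly_mul_of_progressions {S : Set ℕ} {K N E L c : ℕ} (hK : 1 < K)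
    (hL : 0 < L) (hLc : L ≤ c * E)
    (hprog : ∀ n, ∃ B, L * K ^ n ≤ B ∧ B ≤ 2 * L * K ^ n ∧
      ∀ j < K ^ n, SumOfExactly S N (B + E * j))
    {y : ℕ} (hy : 8 * c * L * K ≤ y) :
    ∃ N' ≤ 8 * c * K * (N * E), SumOfExactly S N' (E * y) := by
  have hc : 0 < c := Nat.pos_of_mul_pos_right (hL.trans_le hLc)
  have hD : 0 < 8 * c * L := by positivity
  obtain ⟨n, hn, hlow, hhigh⟩ := exists_mul_pow_le_lt_mul_pow_succ hK hD hy
  obtain ⟨B, hLB, hBL, hB⟩ := hprog n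
  have hKn : 2 ≤ K ^ n := hK.trans_le (Nat.le_self_pow hn K)
  have hB_pos : 0 < B := lt_of_lt_of_le (by positivity) hLB
  set t := y / B
  have ht : 4 * c ≤ t := by
    rw [Nat.le_div_iff_mul_le hB_pos]
    calc 4 * c * B ≤ 4 * c * (2 * L * K ^ n) := by gcongr
      _ = 8 * c * L * K ^ n := by ring
      _ ≤ y := hlow
  have ht' : t ≤ 8 * c * K := by
    refine Nat.le_of_mul_le_mul_right ?_ (show 0 < L * K ^ n by positivity)
    calc t * (L * K ^ n) ≤ t * B := by gcongr
      _ ≤ y := Nat.div_mul_le_self y B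
      _ ≤ 8 * c * L * K ^ (n + 1) := hhigh.le
      _ = 8 * c * K * (L * K ^ n) := by ring
  have hr : y % B ≤ E * t * (K ^ n - 1) := by
    calc y % B ≤ L * (2 * K ^ n) := by linarith [Nat.mod_lt y hB_pos]
      _ ≤ c * E * (4 * (K ^ n - 1)) := Nat.mul_le_mul hLc (by omega)
      _ = E * (4 * c) * (K ^ n - 1) := by ring
      _ ≤ E * t * (K ^ n - 1) := by gcongr
  refine ⟨E * t * N, ?_, ?_⟩
  · calc E * t * N ≤ E * (8 * c * K) * N := by gcongr
      _ = 8 * c * K * (N * E) := by ring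
  · convert SumOfExactly.progression_mul (fun j hj => hB j (by omega)) (E * t) hr using 1
    rw [mul_assoc, ← mul_add, mul_comm t, Nat.div_add_mod]

end Progressions

section Automaton

variable {k : ℕ} {σ : Type*} {M : DFA (Fin k) σ} {S : Set ℕ} {q : σ}

theorem exists_length_lt_card_evalFrom_eq {α : Type*} [Fintype σ] (M : DFA α σ) (s : σ)
    (w : List α) :
    ∃ w', w'.length < Fintype.card σ ∧ M.evalFrom s w' = M.evalFrom s w :=
  let ⟨w', _, hlt, heq⟩ := exists_sublist_length_lt_card_foldl_eq M.step s w
  ⟨w', hlt, heq⟩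

theorem BranchesAt.exists_loops_wordValue_lt [Fintype σ] (h : BranchesAt M q) :
    ∃ a b, a.length = b.length ∧ b.length ≤ 2 * Fintype.card σ ∧
      M.evalFrom q a = q ∧ M.evalFrom q b = q ∧ wordValue b < wordValue a := by
  obtain ⟨c, d, x, y, hcd, hx, hy⟩ := h
  obtain ⟨x', hx'_len, hx'⟩ := exists_length_lt_card_evalFrom_eq M (M.step q c) x
  obtain ⟨y', hy'_len, hy'⟩ := exists_length_lt_card_evalFrom_eq M (M.step q d) y
  have hcx : M.evalFrom q (c :: x') = q := hx'.trans hx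
  have hdy : M.evalFrom q (d :: y') = q := hy'.trans hy
  have hne : wordValue (c :: x' ++ d :: y') ≠ wordValue (d :: y' ++ c :: x') := fun heq => hcd <|
    Fin.ext <| by simpa only [List.cons_append, wordValue_cons_mod] using congrArg (· % k) heq
  have hloop₁ : M.evalFrom q (c :: x' ++ d :: y') = q := by rw [DFA.evalFrom_of_append, hcx, hdy]
  have hloop₂ : M.evalFrom q (d :: y' ++ c :: x') = q := by rw [DFA.evalFrom_of_append, hdy, hcx]
  rcases hne.lt_or_gt with hlt | hlt
  · exact ⟨_, _, by simp; omega, by simp; omega, hloop₂, hloop₁, hlt⟩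
  · exact ⟨_, _, by simp; omega, by simp; omega, hloop₁, hloop₂, hlt⟩

/-- The set of values, in base `k`, of the words that `M` accepts when started in the state `q`. -/
def valuesFrom (M : DFA (Fin k) σ) (q : σ) : Set ℕ :=
  {x | ∃ w, M.evalFrom q w ∈ M.accept ∧ wordValue w = x}

theorem add_pow_mul_mem_valuesFrom {q' : σ} {w : List (Fin k)} {x : ℕ} (hw : M.evalFrom q w = q')
    (hx : x ∈ valuesFrom M q') : wordValue w + k ^ w.length * x ∈ valuesFrom M q := by
  obtain ⟨v, hv, rfl⟩ := hx
  exact ⟨w ++ v, by rwa [DFA.evalFrom_of_append, hw], wordValue_append w v⟩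

theorem SumOfExactly.valuesFrom_start_of_loops {u a b : List (Fin k)} (hu : M.eval u = q)
    (ha : M.evalFrom q a = q) (hb : M.evalFrom q b = q) (hab : a.length = b.length) {N p n i j : ℕ}
    (hp : p ∈ valuesFrom M q) (hN : N + 1 = k ^ b.length) (hij : i + j + 1 = (N + 1) ^ n) :
    SumOfExactly (valuesFrom M M.start) N (N * wordValue u + k ^ u.length *
      (N * ((N + 1) ^ n * p) + (wordValue b * i + wordValue a * j))) := by
  refine (SumOfExactly.of_affine_closed ?_ ?_ hp hij).affine fun _ =>
    add_pow_mul_mem_valuesFrom hu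
  · rw [hN, ← hab]
    exact fun _ => add_pow_mul_mem_valuesFrom ha
  · rw [hN]
    exact fun _ => add_pow_mul_mem_valuesFrom hb

theorem exists_progressions_valuesFrom_start {u a b : List (Fin k)} (hu : M.eval u = q)
    (ha : M.evalFrom q a = q) (hb : M.evalFrom q b = q) (hab : a.length = b.length)
    (hlt : wordValue b < wordValue a) {N p : ℕ} (hp : p ∈ valuesFrom M q) (hp_pos : 0 < p)
    (hk : 1 < k) (hN : N + 1 = k ^ b.length) (n : ℕ) :
    ∃ B, N * k ^ u.length * p * (N + 1) ^ n ≤ B ∧ B ≤ 2 * (N * k ^ u.length * p) * (N + 1) ^ n ∧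
      ∀ j < (N + 1) ^ n, SumOfExactly (valuesFrom M M.start) N
        (B + k ^ u.length * (wordValue a - wordValue b) * j) := by
  obtain ⟨J, hJ⟩ : ∃ J, (N + 1) ^ n = J + 1 := Nat.exists_eq_add_one.2 (by positivity)
  refine ⟨N * wordValue u + k ^ u.length * (N * ((N + 1) ^ n * p) + wordValue b * J), ?_, ?_,
    fun j hj => ?_⟩
  · calc N * k ^ u.length * p * (N + 1) ^ n = k ^ u.length * (N * ((N + 1) ^ n * p)) := by ring
      _ ≤ k ^ u.length * (N * ((N + 1) ^ n * p) + wordValue b * J) := by gcongr; omega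
      _ ≤ _ := Nat.le_add_left ..
  · have hu_lt : wordValue u ≤ k ^ u.length := (wordValue_lt hk u).le
    have hb_le : wordValue b ≤ N := by
      have := wordValue_lt hk b
      omega
    calc _ ≤ N * k ^ u.length + k ^ u.length * (N * ((N + 1) ^ n * p) + N * J) := by gcongr
      _ = N * k ^ u.length * (N + 1) ^ n * (p + 1) := by rw [hJ]; ring
      _ ≤ N * k ^ u.length * (N + 1) ^ n * (2 * p) := by gcongr; omega
      _ = 2 * (N * k ^ u.length * p) * (N + 1) ^ n := by ring
  · obtain ⟨i, rfl⟩ := Nat.exists_eq_add_of_le (show j ≤ J by omega)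
    convert SumOfExactly.valuesFrom_start_of_loops hu ha hb hab hp hN
      (show i + j + 1 = (N + 1) ^ n by omega) using 1
    obtain ⟨δ, hδ⟩ := Nat.exists_eq_add_of_le hlt.le
    rw [hδ, Nat.add_sub_cancel_left]
    ring

theorem exists_progressions_of_branchesAt [Fintype σ] (hk : 1 < k) {u v : List (Fin k)}
    (hacc : u ++ v ∈ M.accepts) (hbranch : BranchesAt M (M.eval u)) :
    ∃ N V p E, 0 < N ∧ 0 < V ∧ 0 < p ∧ V ≤ E ∧ N + 1 ≤ (k ^ Fintype.card σ) ^ 2 ∧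
      V ≤ k ^ Fintype.card σ ∧ p ≤ (k ^ Fintype.card σ) ^ 3 ∧ E ≤ (k ^ Fintype.card σ) ^ 3 ∧
      ∀ n, ∃ B, N * V * p * (N + 1) ^ n ≤ B ∧ B ≤ 2 * (N * V * p) * (N + 1) ^ n ∧
        ∀ j < (N + 1) ^ n, SumOfExactly (valuesFrom M M.start) N (B + E * j) := by
  obtain ⟨a, b, hab, hb_len, ha, hb, hlt⟩ := hbranch.exists_loops_wordValue_lt
  obtain ⟨u', hu'_len, hu'⟩ := exists_length_lt_card_evalFrom_eq M M.start u
  obtain ⟨v', hv'_len, hv'⟩ := exists_length_lt_card_evalFrom_eq M (M.eval u) v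
  rw [DFA.mem_accepts, DFA.eval, DFA.evalFrom_of_append] at hacc
  have hp : wordValue a + k ^ a.length * wordValue v' ∈ valuesFrom M (M.eval u) :=
    add_pow_mul_mem_valuesFrom ha ⟨v', hv' ▸ hacc, rfl⟩
  rw [← wordValue_append] at hp
  have ha_lt := wordValue_lt hk a
  rw [hab] at ha_lt
  have hpow {i j : ℕ} (hij : i ≤ j * Fintype.card σ) : k ^ i ≤ (k ^ Fintype.card σ) ^ j := by
    rw [← pow_mul']
    exact Nat.pow_le_pow_right hk.le hij
  have hK : k ^ b.length ≤ (k ^ Fintype.card σ) ^ 2 := hpow hb_len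
  have hV : k ^ u'.length ≤ k ^ Fintype.card σ := Nat.pow_le_pow_right hk.le hu'_len.le
  refine ⟨k ^ b.length - 1, k ^ u'.length, wordValue (a ++ v'),
    k ^ u'.length * (wordValue a - wordValue b), by omega, by positivity, ?_,
    Nat.le_mul_of_pos_right _ (by omega), by omega, hV, ?_, ?_,
    exists_progressions_valuesFrom_start hu' ha hb hab hlt hp ?_ hk (by omega)⟩
  · rw [wordValue_append]
    omega
  · refine (wordValue_lt hk _).le.trans (hpow ?_)
    rw [List.length_append]
    omega
  · rw [pow_succ']
    exact Nat.mul_le_mul hV (by omega)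
  · rw [wordValue_append]
    omega

theorem exists_sumOfExactly_mul_of_branchesAt [Fintype σ] (hk : 1 < k) {u v : List (Fin k)}
    (hacc : u ++ v ∈ M.accepts) (hbranch : BranchesAt M (M.eval u)) :
    ∃ E, 0 < E ∧ E ≤ (k ^ Fintype.card σ) ^ 3 ∧ ∀ y, 8 * (k ^ Fintype.card σ) ^ 16 ≤ E * y →
      ∃ N ≤ 8 * (k ^ Fintype.card σ) ^ 12, SumOfExactly (valuesFrom M M.start) N (E * y) := by
  obtain ⟨N, V, p, E, hN_pos, hV_pos, hp_pos, hVE, hK, hV, hp, hE, hprog⟩ :=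
    exists_progressions_of_branchesAt hk hacc hbranch
  set X := k ^ Fintype.card σ
  have hN : N ≤ X ^ 2 := (Nat.le_succ N).trans hK
  have hE_pos : 0 < E := hV_pos.trans_le hVE
  refine ⟨E, hE_pos, hE, fun y hy => ?_⟩
  have hy' : 8 * (N * p) * (N * V * p) * (N + 1) ≤ y := by
    refine Nat.le_of_mul_le_mul_left ?_ hE_pos
    calc E * (8 * (N * p) * (N * V * p) * (N + 1))
        ≤ X ^ 3 * (8 * (X ^ 2 * X ^ 3) * (X ^ 2 * X * X ^ 3) * X ^ 2) := by gcongr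
      _ = 8 * X ^ 16 := by ring
      _ ≤ E * y := hy
  have hLc : N * V * p ≤ N * p * E := by
    rw [mul_right_comm]
    exact Nat.mul_le_mul_left _ hVE
  obtain ⟨N', hN', h⟩ := exists_sumOfExactly_mul_of_progressions
    (Nat.lt_add_of_pos_left hN_pos) (by positivity) hLc hprog hy'
  refine ⟨N', hN'.trans ?_, h⟩
  calc 8 * (N * p) * (N + 1) * (N * E)
      ≤ 8 * (X ^ 2 * X ^ 3) * X ^ 2 * (X ^ 2 * X ^ 3) := by gcongr
    _ = 8 * X ^ 12 := by ring

end Automaton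

section AdditiveBasis

variable {k : ℕ} {σ : Type*} {M : DFA (Fin k) σ} {S : Set ℕ}

theorem RecognizesDigits.valuesFrom_start_subset (hM : RecognizesDigits M S) :
    valuesFrom M M.start ⊆ S := by
  rintro _ ⟨w, hw, rfl⟩
  exact hM.wordValue_mem hw

variable [Fintype σ]

theorem RecognizesDigits.exists_sumOfExactly_modEq (hk : 1 < k) (hM : RecognizesDigits M S)
    (hgcd : Nat.setGcd S = 1) {E : ℕ} (hE : 0 < E) (n : ℕ) :
    ∃ N ≤ E, ∃ r ≤ E * (k ^ Fintype.card σ) ^ 2, SumOfExactly S N r ∧ r ≡ n [MOD E] := by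
  have hgcd' := (hM.setGcd_lt_pow_eq hk).trans hgcd
  rw [pow_mul'] at hgcd'
  obtain ⟨N, hN, r, hr, hsum, hmod⟩ :=
    exists_sumOfExactly_modEq_of_forall_le hgcd' (fun _ hs => hs.2.le) hE n
  exact ⟨N, hN.le, r, hr.trans (Nat.mul_le_mul_right _ hN.le), hsum.mono_set fun _ hs => hs.1, hmod⟩

theorem mul_pow_le_mul_pow_add {a b c d j : ℕ} (hk : 2 ≤ k) (hab : a ≤ b) (hdc : d ≤ c * 2 ^ j) :
    d * k ^ a ≤ c * k ^ (b + j) := calc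
  d * k ^ a ≤ c * 2 ^ j * k ^ b := Nat.mul_le_mul hdc (Nat.pow_le_pow_right (by omega) hab)
  _ ≤ c * k ^ j * k ^ b := by gcongr
  _ = c * k ^ (b + j) := by ring

theorem automatic_additive_basis_explicit_bounds_general (hk : 2 ≤ k) (hns : ¬ IsSparse S)
    (hgcd : ∀ d : ℕ, (∀ n ∈ S, d ∣ n) → d = 1) (hM : RecognizesDigits M S) {n : ℕ}
    (hn : 9 * k ^ (16 * Fintype.card σ) ≤ n) :
    SumOfAtMost S (9 * k ^ (12 * Fintype.card σ)) n := by
  obtain ⟨u, v, hacc, hbranch⟩ : ∃ u v, u ++ v ∈ M.accepts ∧ BranchesAt M (M.eval u) := by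
    by_contra! h
    exact hns (hM.isSparse hk h)
  obtain ⟨E, hE_pos, hE, hlarge⟩ := exists_sumOfExactly_mul_of_branchesAt hk hacc hbranch
  have hgcd_one : Nat.setGcd S = 1 := hgcd _ fun _ => Nat.setGcd_dvd_of_mem
  obtain ⟨N₁, hN₁, r, hr, hsum₁, hmod⟩ := hM.exists_sumOfExactly_modEq hk hgcd_one hE_pos n
  rw [pow_mul'] at hn ⊢
  set X := k ^ Fintype.card σ
  have hX : 0 < X := by positivity
  have hX_pow_pos : 0 < X ^ 16 := by positivity
  have hr' : r ≤ X ^ 16 := calc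
    r ≤ X ^ 3 * X ^ 2 := hr.trans (Nat.mul_le_mul_right _ hE)
    _ = X ^ 5 := by ring
    _ ≤ X ^ 16 := Nat.pow_le_pow_right hX (by norm_num)
  obtain ⟨y, hy⟩ := (Nat.modEq_iff_dvd' (by omega)).1 hmod
  obtain ⟨N₂, hN₂, hsum₂⟩ := hlarge y (by omega)
  have hX_pow : X ^ 3 ≤ X ^ 12 := Nat.pow_le_pow_right hX (by norm_num)
  have hsum := hsum₁.add (hsum₂.mono_set hM.valuesFrom_start_subset)
  rw [← hy, Nat.add_sub_cancel' (by omega)] at hsum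
  exact hsum.sumOfAtMost (by omega) (by omega)

end AdditiveBasis

/-- If `S` is a non-sparse `k`-automatic set with `gcd(S) = 1`, accepted (via base-`k`
expansions) by a DFA with `m` states, then every `n ≥ 3·k^(16m+5)` is a sum of at most
`5·k^(16m+3)` elements of `S`. -/
theorem automatic_additive_basis_explicit_bounds
    (k m : ℕ) (hk : 2 ≤ k) (S : Set ℕ)
    (hns : ¬ IsSparse S)
    (hgcd : ∀ d : ℕ, (∀ n ∈ S, d ∣ n) → d = 1)
    (M : DFA (Fin k) (Fin m))
    (hM : ∀ w : List (Fin k), w ∈ M.accepts ↔ ∃ s ∈ S, w.map Fin.val = Nat.digits k s) :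
    ∀ n : ℕ, 3 * k ^ (16 * m + 5) ≤ n → SumOfAtMost S (5 * k ^ (16 * m + 3)) n := by
  refine fun n hn => (automatic_additive_basis_explicit_bounds_general hk hns hgcd hM ?_).mono ?_
  · exact (mul_pow_le_mul_pow_add hk (by simp) (by norm_num)).trans hn
  · exact mul_pow_le_mul_pow_add hk (by simp; omega) (by norm_num)
end

section
/- Let L be a regular language over a finite alphabet Σ. The following are equivalent: (a) L has exponential growth; (b) there exists a real number α > 1 such that h_L(n) = Ω(α^n), where h_L(n) = |L ∩ Σ^{≤n}|; (c) there exist words w, x, y, z ∈ Σ^* with xy ≠ yx such that w·{x,y}^*·z ⊆ L; (d) there exist words s, t, u, v ∈ Σ^* with |t| = |u| and t ≠ u such that s·{t,u}^*·v ⊆ L. -/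
open Computability
/-- `g_L(n) = |L ∩ Σ^n|`, the number of words in `L` of length exactly `n`. -/
noncomputable def wordCount {α : Type} (L : Language α) (n : ℕ) : ℕ :=
  Set.ncard {w | w ∈ L ∧ w.length = n}

/-- `h_L(n) = |L ∩ Σ^{≤n}|`, the number of words in `L` of length at most `n`. -/
noncomputable def wordCountLe {α : Type} (L : Language α) (n : ℕ) : ℕ :=
  Set.ncard {w | w ∈ L ∧ w.length ≤ n}

/-- `L` has polynomial growth: `g_L(n) = O(n^c)` for some constant `c`. -/
def PolyGrowth {α : Type} (L : Language α) : Prop :=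
  ∃ c : ℕ, ∃ C : ℝ, 0 < C ∧ ∃ n0 : ℕ, ∀ n : ℕ, n0 ≤ n →
    (wordCount L n : ℝ) ≤ C * (n : ℝ) ^ c

/-- `L` has exponential growth: `g_L(n) > α^n` for some real `α > 1` and
infinitely many `n`. -/
def ExpGrowth {α : Type} (L : Language α) : Prop :=
  ∃ a : ℝ, 1 < a ∧ ∀ N : ℕ, ∃ n : ℕ, N ≤ n ∧ a ^ n < (wordCount L n : ℝ)

/-!
If `t ≠ u` have equal length, then `{t, u}^k` consists of `2 ^ k` words of one length, so `(d)`
forces exponential growth of both `g_L` and `h_L`; and `(c)` gives `(d)` with `t = xy`, `u = yx`.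

Conversely, regard the finitely many left quotients of `L` as the states of its minimal automaton.
If `(d)` fails, then every useful state has at most one closed path of each length. Cutting an
accepted word at the last visit to each state in turn then determines it by one length and one
letter per state, so `h_L` is bounded by a polynomial.
-/

open Filter Topology

section WordCount

variable {α : Type} {K L : Language α}

theorem wordCount_mono [Finite α] (h : K ≤ L) (n : ℕ) : wordCount K n ≤ wordCount L n :=
  Set.ncard_le_ncard (fun _ hw => ⟨h hw.1, hw.2⟩)
    ((List.finite_length_eq α n).subset fun _ hw => hw.2)

theorem wordCountLe_mono [Finite α] (h : K ≤ L) (n : ℕ) : wordCountLe K n ≤ wordCountLe L n :=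
  Set.ncard_le_ncard (fun _ hw => ⟨h hw.1, hw.2⟩)
    ((List.finite_length_le α n).subset fun _ hw => hw.2)

theorem wordCount_le_wordCountLe [Finite α] (L : Language α) {m n : ℕ} (h : m ≤ n) :
    wordCount L m ≤ wordCountLe L n :=
  Set.ncard_le_ncard (fun _ hw => ⟨hw.1, hw.2.le.trans h⟩)
    ((List.finite_length_le α n).subset fun _ hw => hw.2)

theorem wordCountLe_iSup_le {ι : Type*} [Fintype ι] (F : ι → Language α) (n : ℕ) :
    wordCountLe (⨆ i, F i) n ≤ ∑ i, wordCountLe (F i) n := by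
  have hset : {w | w ∈ (⨆ i, F i) ∧ w.length ≤ n} =
      ⋃ i ∈ Finset.univ, {w | w ∈ F i ∧ w.length ≤ n} := by
    ext w
    simp [Language.mem_iSup]
  rw [wordCountLe, hset]
  exact Finset.set_ncard_biUnion_le _ _

theorem wordCountLe_le_sum_wordCount (L : Language α) (n : ℕ) :
    wordCountLe L n ≤ ∑ m ∈ Finset.range (n + 1), wordCount L m := by
  have hset : {w | w ∈ L ∧ w.length ≤ n} =
      ⋃ m ∈ Finset.range (n + 1), {w | w ∈ L ∧ w.length = m} := by
    ext w
    simp [and_comm]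
  rw [wordCountLe, hset]
  exact Finset.set_ncard_biUnion_le _ _

theorem wordCountLe_add_le (K L : Language α) (n : ℕ) :
    wordCountLe (K + L) n ≤ wordCountLe K n + wordCountLe L n := by
  have hset : {w | w ∈ K + L ∧ w.length ≤ n} =
      {w | w ∈ K ∧ w.length ≤ n} ∪ {w | w ∈ L ∧ w.length ≤ n} :=
    Set.ext fun _ => or_and_right
  rw [wordCountLe, hset]
  exact Set.ncard_union_le _ _

theorem wordCountLe_mul_le [Finite α] (K L : Language α) (n : ℕ) :
    wordCountLe (K * L) n ≤ wordCountLe K n * wordCountLe L n := by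
  have hfin (M : Language α) : {w | w ∈ M ∧ w.length ≤ n}.Finite :=
    (List.finite_length_le α n).subset fun _ hw => hw.2
  rw [wordCountLe, wordCountLe, wordCountLe, ← Set.ncard_prod]
  refine (Set.ncard_le_ncard ?_ (((hfin K).prod (hfin L)).image fun p => p.1 ++ p.2)).trans
    (Set.ncard_image_le ((hfin K).prod (hfin L)))
  rintro _ ⟨⟨x, hx, y, hy, rfl⟩, hlen⟩
  have hsum : x.length + y.length ≤ n := List.length_append ▸ hlen
  exact ⟨(x, y), ⟨⟨hx, le_of_add_le_left hsum⟩, hy, le_of_add_le_right hsum⟩, rfl⟩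

theorem wordCountLe_singleton_le_one (w : List α) (n : ℕ) :
    wordCountLe ({w} : Language α) n ≤ 1 :=
  (Set.ncard_le_ncard (fun _ hv => hv.1) (Set.finite_singleton w)).trans_eq
    (Set.ncard_singleton w)

theorem wordCountLe_zero (n : ℕ) : wordCountLe (0 : Language α) n = 0 := by
  simp [wordCountLe]

theorem one_le_wordCount_singleton (w : List α) :
    1 ≤ wordCount ({w} : Language α) w.length := by
  have hset : {v | v ∈ ({w} : Language α) ∧ v.length = w.length} = {w} :=
    Set.ext fun v => ⟨And.left, fun hv => ⟨hv, congrArg List.length hv⟩⟩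
  rw [wordCount, hset, Set.ncard_singleton]

theorem one_lt_wordCount_iff [Finite α] {n : ℕ} :
    1 < wordCount L n ↔
      ∃ t ∈ L, ∃ u ∈ L, t.length = n ∧ u.length = n ∧ t ≠ u := by
  rw [wordCount, Set.one_lt_ncard ((List.finite_length_eq α n).subset fun _ hw => hw.2)]
  simp only [Set.mem_ofPred_eq]
  grind

theorem wordCount_mul_le [Finite α] (K L : Language α) (m n : ℕ) :
    wordCount K m * wordCount L n ≤ wordCount (K * L) (m + n) := by
  rw [wordCount, wordCount, ← Set.ncard_prod]
  refine Set.ncard_le_ncard_of_injOn (fun p => p.1 ++ p.2) ?_ ?_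
    ((List.finite_length_eq α (m + n)).subset fun _ hw => hw.2)
  · rintro ⟨x, y⟩ ⟨⟨hx, rfl⟩, hy, rfl⟩
    exact ⟨Language.append_mem_mul hx hy, List.length_append⟩
  · rintro ⟨x, y⟩ ⟨⟨_, hx⟩, _⟩ ⟨x', y'⟩ ⟨⟨_, hx'⟩, _⟩ happ
    exact Prod.ext_iff.mpr (List.append_inj happ (hx.trans hx'.symm))

theorem wordCount_pow_le [Finite α] (K : Language α) (m k : ℕ) :
    wordCount K m ^ k ≤ wordCount (K ^ k) (k * m) := by
  induction k with
  | zero =>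
    rw [pow_zero, pow_zero, Nat.zero_mul]
    exact one_le_wordCount_singleton []
  | succ k ih =>
    rw [pow_succ, pow_succ, Nat.succ_mul]
    exact (Nat.mul_le_mul_right _ ih).trans (wordCount_mul_le _ _ _ _)

theorem wordCount_le_wordCount_singleton_mul_mul_singleton [Finite α] (L : Language α)
    (s v : List α) (n : ℕ) :
    wordCount L n ≤ wordCount ({s} * L * {v}) (s.length + n + v.length) := by
  have hleft : wordCount L n ≤ wordCount ({s} * L) (s.length + n) :=
    (le_mul_of_one_le_left' (one_le_wordCount_singleton s)).trans (wordCount_mul_le {s} L _ n)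
  exact hleft.trans <|
    (le_mul_of_one_le_right' (one_le_wordCount_singleton v)).trans (wordCount_mul_le _ {v} _ _)

theorem wordCount_pow_le_of_mul_kstar_mul_le [Finite α] {s v : List α}
    (h : ({s} : Language α) * K∗ * {v} ≤ L) (m k : ℕ) :
    wordCount K m ^ k ≤ wordCount L (s.length + v.length + k * m) := by
  have hpow : ({s} : Language α) * K ^ k * {v} ≤ L := by
    grw [← h, pow_le_kstar]
  have hcontext := wordCount_le_wordCount_singleton_mul_mul_singleton (K ^ k) s v (k * m)
  rw [add_right_comm]
  exact (wordCount_pow_le K m k).trans (hcontext.trans (wordCount_mono hpow _))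

end WordCount

section Growth

variable {α : Type} {L : Language α}

/-- The function `h_L` has an exponential lower bound: `h_L(n) = Ω(a^n)` for some real `a > 1`. -/
def CumulativeExpGrowth (L : Language α) : Prop :=
  ∃ a : ℝ, 1 < a ∧ ∃ c : ℝ, 0 < c ∧ ∃ n0 : ℕ, ∀ n : ℕ, n0 ≤ n →
    c * a ^ n ≤ (wordCountLe L n : ℝ)

theorem exists_one_lt_pow_eq {b : ℝ} (hb : 1 < b) {m : ℕ} (hm : m ≠ 0) :
    ∃ a : ℝ, 1 < a ∧ a ^ m = b :=
  ⟨b ^ (m⁻¹ : ℝ), Real.one_lt_rpow hb (by positivity),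
    Real.rpow_inv_natCast_pow (by positivity) hm⟩

theorem expGrowth_of_pow_le_wordCount {b : ℝ} (hb : 1 < b) {C m : ℕ} (hm : m ≠ 0)
    (h : ∀ k, b ^ k ≤ wordCount L (C + k * m)) : ExpGrowth L := by
  -- The exponent `2 * m` rather than `m` absorbs the offset `C`.
  obtain ⟨a, ha, hab⟩ := exists_one_lt_pow_eq hb (mul_ne_zero two_ne_zero hm)
  refine ⟨a, ha, fun N => ?_⟩
  let k := C + N + 1
  have hk : k ≤ k * m := Nat.le_mul_of_pos_right k (Nat.pos_of_ne_zero hm)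
  refine ⟨C + k * m, by omega, ?_⟩
  calc a ^ (C + k * m) < a ^ (2 * m * k) := pow_lt_pow_right₀ ha (by grind)
    _ = b ^ k := by rw [pow_mul, hab]
    _ ≤ wordCount L (C + k * m) := h k

theorem cumulativeExpGrowth_of_pow_le_wordCount [Finite α] {b : ℝ} (hb : 1 < b) {C m : ℕ}
    (hm : m ≠ 0) (h : ∀ k, b ^ k ≤ wordCount L (C + k * m)) : CumulativeExpGrowth L := by
  obtain ⟨a, ha, hab⟩ := exists_one_lt_pow_eq hb hm
  refine ⟨a, ha, (a ^ (C + m))⁻¹, by positivity, C, fun n hn => ?_⟩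
  let k := (n - C) / m
  have hdiv : m * k + (n - C) % m = n - C := Nat.div_add_mod (n - C) m
  have hmod : (n - C) % m < m := Nat.mod_lt _ (Nat.pos_of_ne_zero hm)
  rw [inv_mul_le_iff₀ (by positivity)]
  calc a ^ n ≤ a ^ (C + m + m * k) := pow_le_pow_right₀ ha.le (by omega)
    _ = a ^ (C + m) * b ^ k := by rw [pow_add, pow_mul, hab]
    _ ≤ a ^ (C + m) * wordCount L (C + k * m) := by gcongr; exact h k
    _ ≤ a ^ (C + m) * wordCountLe L n := by
      gcongr
      exact wordCount_le_wordCountLe L (by rw [mul_comm k m]; omega)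

theorem eventually_pow_lt_const_mul_pow (D : ℝ) (s : ℕ) {a c : ℝ} (ha : 1 < a) (hc : 0 < c) :
    ∀ᶠ n : ℕ in atTop, ((n + 1) * D) ^ s < c * a ^ n := by
  have hlim : Tendsto (fun n : ℕ => D ^ s * a * (((n + 1 : ℕ) : ℝ) ^ s / a ^ (n + 1)))
      atTop (𝓝 0) := by
    simpa using ((tendsto_pow_const_div_const_pow_of_one_lt s ha).comp
      (tendsto_add_atTop_nat 1)).const_mul (D ^ s * a)
  filter_upwards [hlim.eventually_lt_const hc] with n hn
  calc ((n + 1) * D) ^ s = D ^ s * a * (((n + 1 : ℕ) : ℝ) ^ s / a ^ (n + 1)) * a ^ n := by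
        rw [mul_pow]
        push_cast
        field_simp
        ring
    _ < c * a ^ n := by gcongr

end Growth

section Stars

variable {α : Type} {L : Language α}

/-- `L` contains `w {x, y}∗ z` for some words with `x` and `y` not commuting. -/
def HasNoncommutingStar (L : Language α) : Prop :=
  ∃ w x y z : List α, x ++ y ≠ y ++ x ∧
    ({w} : Language α) * (({x} : Language α) + {y})∗ * {z} ≤ L

/-- `L` contains `s {t, u}∗ v` for some words with `t` and `u` distinct and of equal length. -/
def HasEqualLengthStar (L : Language α) : Prop :=
  ∃ s t u v : List α, t.length = u.length ∧ t ≠ u ∧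
    ({s} : Language α) * (({t} : Language α) + {u})∗ * {v} ≤ L

theorem singleton_add_singleton_le_iff {t u : List α} :
    ({t} : Language α) + {u} ≤ L ↔ t ∈ L ∧ u ∈ L :=
  Set.union_subset_iff.trans (and_congr Set.singleton_subset_iff Set.singleton_subset_iff)

theorem HasNoncommutingStar.hasEqualLengthStar (h : HasNoncommutingStar L) :
    HasEqualLengthStar L := by
  obtain ⟨w, x, y, z, hne, hL⟩ := h
  let K : Language α := {x} + {y}
  obtain ⟨hx, hy⟩ : x ∈ K∗ ∧ y ∈ K∗ := singleton_add_singleton_le_iff.mp le_kstar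
  have hmem {p q : List α} (hp : p ∈ K∗) (hq : q ∈ K∗) : p ++ q ∈ K∗ := by
    rw [← kstar_mul_kstar]
    exact Language.append_mem_mul hp hq
  have hstar : (({x ++ y} : Language α) + {y ++ x})∗ ≤ K∗ :=
    (kstar_mono (singleton_add_singleton_le_iff.mpr ⟨hmem hx hy, hmem hy hx⟩)).trans_eq
      (kstar_idem K)
  refine ⟨w, x ++ y, y ++ x, z, by simp [add_comm], hne, le_trans ?_ hL⟩
  gcongr

theorem HasEqualLengthStar.hasNoncommutingStar (h : HasEqualLengthStar L) :
    HasNoncommutingStar L := by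
  obtain ⟨s, t, u, v, hlen, hne, hL⟩ := h
  exact ⟨s, t, u, v, fun hcomm => hne (List.append_inj_left hcomm hlen), hL⟩

theorem HasEqualLengthStar.exists_two_pow_le_wordCount [Finite α] (h : HasEqualLengthStar L) :
    ∃ C m : ℕ, m ≠ 0 ∧ ∀ k, 2 ^ k ≤ wordCount L (C + k * m) := by
  obtain ⟨s, t, u, v, hlen, hne, hL⟩ := h
  let K : Language α := {t} + {u}
  have hpos : t.length ≠ 0 := fun h0 =>
    hne ((List.length_eq_zero_iff.mp h0).trans (List.length_eq_zero_iff.mp (hlen ▸ h0)).symm)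
  have htwo : 2 ≤ wordCount K t.length :=
    one_lt_wordCount_iff.mpr ⟨t, .inl rfl, u, .inr rfl, rfl, hlen.symm, hne⟩
  exact ⟨s.length + v.length, t.length, hpos, fun k =>
    (Nat.pow_le_pow_left htwo k).trans (wordCount_pow_le_of_mul_kstar_mul_le hL _ k)⟩

end Stars

section LeftQuotients

variable {α : Type} {K L : Language α}

/-- The words `u` with `u⁻¹K = K`. When `K` is regarded as a state of the minimal automaton,
whose states are left quotients, these are the labels of the closed paths at `K`. -/
def quotientStabilizer (K : Language α) : Language α := {u | K.leftQuotient u = K}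

theorem one_le_quotientStabilizer (K : Language α) : 1 ≤ quotientStabilizer K := by
  rintro _ rfl
  exact K.leftQuotient_nil

theorem quotientStabilizer_mul_self_le (K : Language α) :
    quotientStabilizer K * quotientStabilizer K ≤ quotientStabilizer K := by
  rintro _ ⟨x, hx : K.leftQuotient x = K, y, hy : K.leftQuotient y = K, rfl⟩
  change K.leftQuotient (x ++ y) = K
  rw [Language.leftQuotient_append, hx, hy]

theorem kstar_le_quotientStabilizer (h : L ≤ quotientStabilizer K) :
    L∗ ≤ quotientStabilizer K :=
  (kstar_mono h).trans <|
    kstar_le_of_mul_le_left (one_le_quotientStabilizer K) (quotientStabilizer_mul_self_le K)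

theorem mul_quotientStabilizer_mul_le {w z : List α} (h : w ++ z ∈ L) :
    ({w} : Language α) * quotientStabilizer (L.leftQuotient w) * {z} ≤ L := by
  rintro _ ⟨_, ⟨w, rfl, x, hx, rfl⟩, z, rfl, rfl⟩
  change (L.leftQuotient w).leftQuotient x = L.leftQuotient w at hx
  rw [← Language.leftQuotient_append] at hx
  change (w ++ x) ++ z ∈ L
  rwa [← Language.mem_leftQuotient, hx]

theorem hasEqualLengthStar_of_one_lt_wordCount_quotientStabilizer [Finite α] {w z : List α}
    (hwz : w ++ z ∈ L) {m : ℕ}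
    (h : 1 < wordCount (quotientStabilizer (L.leftQuotient w)) m) :
    HasEqualLengthStar L := by
  obtain ⟨t, ht, u, hu, htm, hum, hne⟩ := one_lt_wordCount_iff.mp h
  have hstar : (({t} : Language α) + {u})∗ ≤ quotientStabilizer (L.leftQuotient w) :=
    kstar_le_quotientStabilizer (singleton_add_singleton_le_iff.mpr ⟨ht, hu⟩)
  refine ⟨w, t, u, z, htm.trans hum.symm, hne, le_trans ?_ (mul_quotientStabilizer_mul_le hwz)⟩
  gcongr

/-- The words of `K` all of whose prefixes `p` have `p⁻¹K ∈ S`: those accepted along a path of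
the minimal automaton that starts at `K` and stays inside the set `S` of states. -/
def wordsThrough (K : Language α) (S : Finset (Language α)) : Language α :=
  {w | w ∈ K ∧ ∀ p, p <+: w → K.leftQuotient p ∈ S}

theorem exists_eq_append_of_last_prefix {P : List α → Prop} (hnil : P []) (w : List α) :
    ∃ u v, w = u ++ v ∧ P u ∧ ∀ p, p ≠ [] → p <+: v → ¬ P (u ++ p) := by
  induction w using List.reverseRecOn with
  | nil => exact ⟨[], [], rfl, hnil, fun p hp hpre => (hp (List.prefix_nil.mp hpre)).elim⟩
  | append_singleton w a ih =>
    by_cases hP : P (w ++ [a])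
    · exact ⟨w ++ [a], [], by simp, hP, fun p hp hpre => (hp (List.prefix_nil.mp hpre)).elim⟩
    · obtain ⟨u, v, rfl, hu, hv⟩ := ih
      refine ⟨u, v ++ [a], by simp, hu, fun p hp hpre => ?_⟩
      rcases List.prefix_concat_iff.mp hpre with rfl | hpre
      · rwa [← List.append_assoc]
      · exact hv p hp hpre

theorem wordsThrough_le_mul [DecidableEq (Language α)] (K : Language α)
    (S : Finset (Language α)) :
    wordsThrough K S ≤ quotientStabilizer K *
      (1 + ⨆ a : α, {[a]} * wordsThrough (K.leftQuotient [a]) (S.erase K)) := by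
  rintro w ⟨hwK, hwS⟩
  -- Cut `w` at the last visit to the state `K`.
  obtain ⟨u, v, rfl, hu, hv⟩ :=
    exists_eq_append_of_last_prefix (P := (· ∈ quotientStabilizer K))
      (one_le_quotientStabilizer K rfl) w
  have hquot (p : List α) : K.leftQuotient (u ++ p) = K.leftQuotient p := by
    rw [Language.leftQuotient_append, show K.leftQuotient u = K from hu]
  refine Language.append_mem_mul hu ?_
  cases v with
  | nil => exact .inl rfl
  | cons a v =>
    refine .inr (Language.mem_iSup.mpr ⟨a, [a], rfl, v, ⟨?_, fun p hp => ?_⟩, rfl⟩)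
    · change a :: v ∈ K.leftQuotient []
      rwa [← hquot, List.append_nil]
    · have hap : a :: p <+: a :: v := List.cons_prefix_cons.mpr ⟨rfl, hp⟩
      rw [← Language.leftQuotient_append, List.singleton_append, ← hquot]
      exact Finset.mem_erase.mpr
        ⟨hv _ (List.cons_ne_nil a p) hap, hwS _ ((List.prefix_append_right_inj u).mpr hap)⟩

theorem wordCountLe_le_succ (h : ∀ m, wordCount K m ≤ 1) (n : ℕ) : wordCountLe K n ≤ n + 1 :=
  calc wordCountLe K n ≤ ∑ m ∈ Finset.range (n + 1), wordCount K m :=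
        wordCountLe_le_sum_wordCount K n
    _ ≤ n + 1 := by
        simpa using Finset.sum_le_card_nsmul (Finset.range (n + 1)) _ 1 fun m _ => h m

theorem wordCountLe_one_add_iSup_le [Fintype α] (F : α → Language α) {n B : ℕ} (hB : 1 ≤ B)
    (hF : ∀ a, wordCountLe (F a) n ≤ B) :
    wordCountLe (1 + ⨆ a, {[a]} * F a) n ≤ (Fintype.card α + 1) * B := by
  have hone : wordCountLe (1 : Language α) n ≤ B := (wordCountLe_singleton_le_one [] n).trans hB
  have hletter (a : α) : wordCountLe ({[a]} * F a) n ≤ B :=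
    (wordCountLe_mul_le _ _ n).trans <|
      (Nat.mul_le_mul (wordCountLe_singleton_le_one [a] n) (hF a)).trans_eq (one_mul B)
  calc wordCountLe (1 + ⨆ a, {[a]} * F a) n
      ≤ wordCountLe (1 : Language α) n + ∑ a, wordCountLe ({[a]} * F a) n :=
        (wordCountLe_add_le _ _ n).trans (Nat.add_le_add_left (wordCountLe_iSup_le _ n) _)
    _ ≤ B + Fintype.card α * B :=
        Nat.add_le_add hone (Finset.sum_le_card_nsmul _ _ B fun a _ => hletter a)
    _ = (Fintype.card α + 1) * B := by ring

theorem wordCountLe_wordsThrough_le [Fintype α] (S : Finset (Language α))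
    (hK : ∀ w z, w ++ z ∈ K → ∀ m, wordCount (quotientStabilizer (K.leftQuotient w)) m ≤ 1)
    (n : ℕ) :
    wordCountLe (wordsThrough K S) n ≤ ((n + 1) * (Fintype.card α + 1)) ^ S.card := by
  classical
  induction S using Finset.strongInduction generalizing K with
  | H S ih =>
    obtain hempty | ⟨z, hzK, hzS⟩ := (wordsThrough K S : Set (List α)).eq_empty_or_nonempty
    · rw [show wordsThrough K S = 0 from hempty, wordCountLe_zero]
      exact Nat.zero_le _
    have hKS : K ∈ S := hzS [] List.nil_prefix
    let D := (n + 1) * (Fintype.card α + 1)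
    have hloops : wordCountLe (quotientStabilizer K) n ≤ n + 1 :=
      wordCountLe_le_succ (hK [] z hzK) n
    have hstep (a : α) :
        wordCountLe (wordsThrough (K.leftQuotient [a]) (S.erase K)) n ≤ D ^ (S.erase K).card :=
      ih _ (Finset.erase_ssubset hKS) fun w v hwv => hK (a :: w) v hwv
    calc wordCountLe (wordsThrough K S) n
        ≤ wordCountLe (quotientStabilizer K) n * wordCountLe
            (1 + ⨆ a : α, {[a]} * wordsThrough (K.leftQuotient [a]) (S.erase K)) n :=
          (wordCountLe_mono (wordsThrough_le_mul K S) n).trans (wordCountLe_mul_le _ _ n)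
      _ ≤ (n + 1) * ((Fintype.card α + 1) * D ^ (S.erase K).card) :=
          Nat.mul_le_mul hloops
            (wordCountLe_one_add_iSup_le _ (Nat.one_le_pow _ _ (by positivity)) hstep)
      _ = D ^ S.card := by rw [← mul_assoc, ← pow_succ', Finset.card_erase_add_one hKS]

theorem exists_wordCountLe_le_pow [Finite α] (hL : L.IsRegular) (hstar : ¬ HasEqualLengthStar L) :
    ∃ D s : ℕ, ∀ n, wordCountLe L n ≤ ((n + 1) * D) ^ s := by
  have := Fintype.ofFinite α
  let S := hL.finite_range_leftQuotient.toFinset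
  refine ⟨Fintype.card α + 1, S.card, fun n => ?_⟩
  have hL_le : L ≤ wordsThrough L S := fun w hw =>
    ⟨hw, fun p _ => hL.finite_range_leftQuotient.mem_toFinset.mpr ⟨p, rfl⟩⟩
  refine (wordCountLe_mono hL_le n).trans (wordCountLe_wordsThrough_le S (fun w z hwz m => ?_) n)
  exact not_lt.mp fun h =>
    hstar (hasEqualLengthStar_of_one_lt_wordCount_quotientStabilizer hwz h)

theorem eventually_wordCountLe_lt [Finite α] (hL : L.IsRegular) (hstar : ¬ HasEqualLengthStar L)
    {a c : ℝ} (ha : 1 < a) (hc : 0 < c) :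
    ∀ᶠ n : ℕ in atTop, (wordCountLe L n : ℝ) < c * a ^ n := by
  obtain ⟨D, s, hbound⟩ := exists_wordCountLe_le_pow hL hstar
  filter_upwards [eventually_pow_lt_const_mul_pow D s ha hc] with n hn
  exact lt_of_le_of_lt (mod_cast hbound n) hn

end LeftQuotients

section Equivalences

variable {α : Type} [Finite α] {L : Language α}

theorem HasEqualLengthStar.expGrowth (h : HasEqualLengthStar L) : ExpGrowth L := by
  obtain ⟨C, m, hm, hcount⟩ := h.exists_two_pow_le_wordCount
  exact expGrowth_of_pow_le_wordCount one_lt_two hm fun k => mod_cast hcount k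

theorem HasEqualLengthStar.cumulativeExpGrowth (h : HasEqualLengthStar L) :
    CumulativeExpGrowth L := by
  obtain ⟨C, m, hm, hcount⟩ := h.exists_two_pow_le_wordCount
  exact cumulativeExpGrowth_of_pow_le_wordCount one_lt_two hm fun k => mod_cast hcount k

theorem ExpGrowth.hasEqualLengthStar (hL : L.IsRegular) (h : ExpGrowth L) :
    HasEqualLengthStar L := by
  by_contra hstar
  obtain ⟨a, ha, hgrowth⟩ := h
  obtain ⟨N, hN⟩ := eventually_atTop.mp (eventually_wordCountLe_lt hL hstar ha one_pos)
  obtain ⟨n, hn, hlt⟩ := hgrowth N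
  have hle : (wordCount L n : ℝ) ≤ wordCountLe L n := mod_cast wordCount_le_wordCountLe L le_rfl
  linarith [hN n hn]

theorem CumulativeExpGrowth.hasEqualLengthStar (hL : L.IsRegular) (h : CumulativeExpGrowth L) :
    HasEqualLengthStar L := by
  by_contra hstar
  obtain ⟨a, ha, c, hc, n0, hgrowth⟩ := h
  obtain ⟨n, hlt, hn⟩ :=
    ((eventually_wordCountLe_lt hL hstar ha hc).and (eventually_ge_atTop n0)).exists
  exact (hgrowth n hn).not_gt hlt

end Equivalences

/-- For a regular language `L`, the following are equivalent:
(a) `L` has exponential growth;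
(b) `h_L(n) = Ω(α^n)` for some real `α > 1`;
(c) `w·{x,y}*·z ⊆ L` for some words with `xy ≠ yx`;
(d) `s·{t,u}*·v ⊆ L` for some words with `|t| = |u|` and `t ≠ u`. -/
theorem regular_exp_growth_tfae
    {α : Type} [Fintype α] (L : Language α) (hL : L.IsRegular) :
    (ExpGrowth L ↔
      (∃ a : ℝ, 1 < a ∧ ∃ c : ℝ, 0 < c ∧ ∃ n0 : ℕ, ∀ n : ℕ, n0 ≤ n →
        c * a ^ n ≤ (wordCountLe L n : ℝ)))
    ∧ (ExpGrowth L ↔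
      (∃ w x y z : List α, x ++ y ≠ y ++ x ∧
        ({w} : Language α) * (({x} : Language α) + {y})∗ * {z} ≤ L))
    ∧ (ExpGrowth L ↔
      (∃ s t u v : List α, t.length = u.length ∧ t ≠ u ∧
        ({s} : Language α) * (({t} : Language α) + {u})∗ * {v} ≤ L)) := by
  have tfae : [ExpGrowth L, CumulativeExpGrowth L, HasNoncommutingStar L,
      HasEqualLengthStar L].TFAE := by
    tfae_have 1 → 4 := ExpGrowth.hasEqualLengthStar hL
    tfae_have 2 → 4 := CumulativeExpGrowth.hasEqualLengthStar hL
    tfae_have 3 → 4 := HasNoncommutingStar.hasEqualLengthStar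
    tfae_have 4 → 1 := HasEqualLengthStar.expGrowth
    tfae_have 4 → 2 := HasEqualLengthStar.cumulativeExpGrowth
    tfae_have 4 → 3 := HasEqualLengthStar.hasNoncommutingStar
    tfae_finish
  exact ⟨tfae.out 0 1, tfae.out 0 2, tfae.out 0 3⟩
end

section
/- Let L be a language of exponential growth accepted by a deterministic finite automaton with n states. Then there exist words s, t, u, v with |s| < n, |v| < n, |t| = |u| < 3n, and t ≠ u, such that s·{t,u}^*·v ⊆ L. -/
open Computability
/-!
Call a state *useful* if it is reachable from the start state and some accepting state is reachable
from it. If two distinct letters `a ≠ b` begin cycles `x = a⋯` and `y = b⋯` through a useful state,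
then `x ++ y` and `y ++ x` are distinct cycles of equal length, and shortening all the paths
involved gives the witnesses. Otherwise, at each useful state at most one letter leads to a state
from which one can return, and every other letter strictly shrinks the set of reachable states.
Induction on the word length then bounds the number of accepted words of length `m` by
`(|Σ| * m + 1) ^ r`, where `r` counts the reachable states, contradicting exponential growth.
-/

lemma not_expGrowth_of_polyGrowth {α : Type} {L : Language α} (hpoly : PolyGrowth L) :
    ¬ ExpGrowth L := by
  rintro ⟨a, ha, hexp⟩
  obtain ⟨c, C, -, n₀, hpoly⟩ := hpoly
  have hpow : (fun m : ℕ ↦ C * (m : ℝ) ^ c) =o[Filter.atTop] fun m ↦ a ^ m :=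
    (isLittleO_pow_const_const_pow_of_one_lt c ha).const_mul_left C
  obtain ⟨N, hN⟩ := Filter.eventually_atTop.mp (hpow.bound one_pos)
  obtain ⟨m, hm, hlt⟩ := hexp (max n₀ N)
  refine hlt.not_ge ?_
  calc (wordCount L m : ℝ) ≤ C * (m : ℝ) ^ c := hpoly m (le_of_max_le_left hm)
    _ ≤ ‖C * (m : ℝ) ^ c‖ := Real.le_norm_self _
    _ ≤ 1 * ‖a ^ m‖ := hN m (le_of_max_le_right hm)
    _ = a ^ m := by rw [one_mul, Real.norm_of_nonneg (by positivity)]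

lemma polyGrowth_of_wordCount_le {α : Type} {L : Language α} {k r : ℕ}
    (hL : ∀ m, wordCount L m ≤ (k * m + 1) ^ r) : PolyGrowth L := by
  refine ⟨r, (k + 1 : ℝ) ^ r, by positivity, 1, fun m hm ↦ ?_⟩
  have hbase : k * m + 1 ≤ (k + 1) * m := by linarith
  rw [← mul_pow]
  exact_mod_cast (hL m).trans (Nat.pow_le_pow_left hbase r)

lemma wordCount_eq_zero_of_forall_notMem {α : Type} {L : Language α} (hL : ∀ w, w ∉ L) (m : ℕ) :
    wordCount L m = 0 := by
  have hempty : {w | w ∈ L ∧ w.length = m} = ∅ :=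
    Set.eq_empty_of_forall_notMem fun w hw ↦ hL w hw.1
  rw [wordCount, hempty, Set.ncard_empty]

lemma wordCount_zero_le_one {α : Type} (L : Language α) : wordCount L 0 ≤ 1 := by
  have hsub : {w | w ∈ L ∧ w.length = 0} ⊆ {[]} := fun w hw ↦ List.length_eq_zero_iff.mp hw.2
  exact (Set.ncard_le_ncard hsub).trans_eq (Set.ncard_singleton [])

lemma wordCount_succ {α : Type} [Fintype α] (L : Language α) (m : ℕ) :
    wordCount L (m + 1) = ∑ a, wordCount (L.leftQuotient [a]) m := by
  have hsplit : {w | w ∈ L ∧ w.length = m + 1} =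
      ⋃ a, List.cons a '' {w | w ∈ L.leftQuotient [a] ∧ w.length = m} := by
    ext (_ | ⟨a, w⟩) <;> simp
  have hfin (a : α) : (List.cons a '' {w | w ∈ L.leftQuotient [a] ∧ w.length = m}).Finite :=
    ((List.finite_length_eq α m).subset fun _ hw ↦ hw.2).image _
  have hdisj : Pairwise (Function.onFun Disjoint fun a ↦
      List.cons a '' {w | w ∈ L.leftQuotient [a] ∧ w.length = m}) := by
    intro a b hab
    rw [Function.onFun, Set.disjoint_left]
    rintro _ ⟨x, -, rfl⟩ ⟨y, -, hxy⟩
    exact hab (List.cons.inj hxy).1.symm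
  rw [wordCount, hsplit, Set.ncard_iUnion_of_finite hfin hdisj, finsum_eq_sum_of_fintype]
  exact Finset.sum_congr rfl fun a _ ↦ Set.ncard_image_of_injective _ List.cons_injective

section Paths

variable {α σ : Type*} (M : DFA α σ)

/-- The language of labels of the paths from `p` to `q` in the transition graph of `M`. -/
def pathLanguage (p q : σ) : Language α := {w | M.evalFrom p w = q}

/-- The set of states of `M` reachable from `q`, including `q` itself. -/
def reachableFrom (q : σ) : Set σ := Set.range (M.evalFrom q)

/-- The letters that begin a cycle of `M` through `q`. Two distinct such letters at a reachable and
co-reachable state are what makes the accepted language grow exponentially. -/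
def returnLetters (q : σ) : Set α := {a | q ∈ reachableFrom M (M.step q a)}

lemma mem_pathLanguage {p q : σ} {w : List α} : w ∈ pathLanguage M p q ↔ M.evalFrom p w = q :=
  Iff.rfl

lemma pathLanguage_mul_pathLanguage_le (p q r : σ) :
    pathLanguage M p q * pathLanguage M q r ≤ pathLanguage M p r := by
  rintro _ ⟨x, rfl, y, rfl, rfl⟩
  exact M.evalFrom_of_append p x y

lemma pathLanguage_mul_acceptsFrom_le (p q : σ) :
    pathLanguage M p q * M.acceptsFrom q ≤ M.acceptsFrom p := by
  intro w hw
  obtain ⟨x, rfl, y, hy, rfl⟩ := Language.mem_mul.mp hw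
  exact M.mem_acceptsFrom.mpr (by rwa [M.evalFrom_of_append])

lemma append_mem_pathLanguage {p q r : σ} {x y : List α} (hx : x ∈ pathLanguage M p q)
    (hy : y ∈ pathLanguage M q r) : x ++ y ∈ pathLanguage M p r :=
  pathLanguage_mul_pathLanguage_le M p q r (Language.append_mem_mul hx hy)

lemma kstar_pathLanguage_self_le (q : σ) : (pathLanguage M q q)∗ ≤ pathLanguage M q q :=
  kstar_le_of_mul_le_left (by rintro _ rfl; rfl) (pathLanguage_mul_pathLanguage_le M q q q)

lemma mul_kstar_mul_le_acceptsFrom {p q : σ} {S K V : Language α} (hS : S ≤ pathLanguage M p q)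
    (hK : K ≤ pathLanguage M q q) (hV : V ≤ M.acceptsFrom q) : S * K∗ * V ≤ M.acceptsFrom p :=
  calc S * K∗ * V
      ≤ pathLanguage M p q * (pathLanguage M q q)∗ * M.acceptsFrom q := by gcongr
    _ ≤ pathLanguage M p q * pathLanguage M q q * M.acceptsFrom q := by
        gcongr; exact kstar_pathLanguage_self_le M q
    _ ≤ pathLanguage M p q * M.acceptsFrom q := by
        gcongr; exact pathLanguage_mul_pathLanguage_le M p q q
    _ ≤ M.acceptsFrom p := pathLanguage_mul_acceptsFrom_le M p q

lemma self_mem_reachableFrom (q : σ) : q ∈ reachableFrom M q := ⟨[], rfl⟩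

lemma reachableFrom_step_subset (q : σ) (a : α) :
    reachableFrom M (M.step q a) ⊆ reachableFrom M q := by
  rintro _ ⟨w, rfl⟩
  exact ⟨a :: w, M.evalFrom_cons q a w⟩

lemma reachableFrom_step_ssubset {q : σ} {a : α} (ha : a ∉ returnLetters M q) :
    reachableFrom M (M.step q a) ⊂ reachableFrom M q :=
  ⟨reachableFrom_step_subset M q a, fun h ↦ ha (h (self_mem_reachableFrom M q))⟩

lemma leftQuotient_acceptsFrom_singleton (q : σ) (a : α) :
    (M.acceptsFrom q).leftQuotient [a] = M.acceptsFrom (M.step q a) := rfl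

lemma exists_short_mem_pathLanguage [Fintype σ] {p q : σ} (hq : q ∈ reachableFrom M p) :
    ∃ w ∈ pathLanguage M p q, w.length < Fintype.card σ := by
  obtain ⟨w, hw, hmin⟩ := exists_minimalFor_of_wellFoundedLT (· ∈ pathLanguage M p q)
    List.length hq
  refine ⟨w, hw, ?_⟩
  by_contra! hlong
  obtain ⟨r, x, y, z, rfl, -, hy, hx, -, hz⟩ := M.evalFrom_split hlong hw
  have hcut : (x ++ y ++ z).length ≤ (x ++ z).length :=
    hmin (append_mem_pathLanguage M hx hz) (by simp)
  have hpos : 0 < y.length := List.length_pos_iff.mpr hy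
  simp only [List.length_append] at hcut
  omega

lemma exists_short_mem_acceptsFrom [Fintype σ] {q : σ} (hq : ∃ v, v ∈ M.acceptsFrom q) :
    ∃ v ∈ M.acceptsFrom q, v.length < Fintype.card σ := by
  obtain ⟨w, hw⟩ := hq
  obtain ⟨v, hv, hlen⟩ := exists_short_mem_pathLanguage M ⟨w, rfl⟩
  exact ⟨v, by rwa [DFA.mem_acceptsFrom, (mem_pathLanguage M).mp hv], hlen⟩

lemma exists_short_cons_mem_pathLanguage [Fintype σ] {q : σ} {a : α} (ha : a ∈ returnLetters M q) :
    ∃ x, a :: x ∈ pathLanguage M q q ∧ (a :: x).length ≤ Fintype.card σ := by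
  obtain ⟨x, hx, hlen⟩ := exists_short_mem_pathLanguage M ha
  exact ⟨x, hx, hlen⟩

lemma exists_ne_mem_pathLanguage_of_nontrivial_returnLetters [Fintype σ] {q : σ}
    (hq : (returnLetters M q).Nontrivial) :
    ∃ t ∈ pathLanguage M q q, ∃ u ∈ pathLanguage M q q,
      t.length = u.length ∧ t.length ≤ 2 * Fintype.card σ ∧ t ≠ u := by
  obtain ⟨a, ha, b, hb, hab⟩ := hq
  obtain ⟨x, hx, hxlen⟩ := exists_short_cons_mem_pathLanguage M ha
  obtain ⟨y, hy, hylen⟩ := exists_short_cons_mem_pathLanguage M hb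
  refine ⟨(a :: x) ++ (b :: y), append_mem_pathLanguage M hx hy,
    (b :: y) ++ (a :: x), append_mem_pathLanguage M hy hx, ?_, ?_, ?_⟩
  · rw [List.length_append, List.length_append, add_comm]
  · rw [List.length_append]
    omega
  · exact fun h ↦ hab (List.cons.inj h).1

end Paths

lemma sum_le_card_mul_add_of_subsingleton {ι : Type*} [Fintype ι] {S : Set ι}
    (hS : S.Subsingleton) {f : ι → ℕ} {b c : ℕ} (hb : ∀ i ∉ S, f i ≤ b) (hc : ∀ i ∈ S, f i ≤ c) :
    ∑ i, f i ≤ Fintype.card ι * b + c := by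
  classical
  obtain rfl | ⟨j, rfl⟩ := hS.eq_empty_or_singleton
  · exact (Finset.sum_le_card_nsmul _ f b fun i _ ↦ hb i (Set.notMem_empty i)).trans
      (Nat.le_add_right _ _)
  · rw [← Finset.sum_erase_add _ _ (Finset.mem_univ j)]
    refine Nat.add_le_add ?_ (hc j rfl)
    calc ∑ i ∈ Finset.univ.erase j, f i ≤ (Finset.univ.erase j).card * b :=
          Finset.sum_le_card_nsmul _ f b fun i hi ↦ hb i (Finset.ne_of_mem_erase hi)
      _ ≤ Fintype.card ι * b := Nat.mul_le_mul_right b (Finset.card_le_univ _)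

section Growth

variable {α : Type} {σ : Type*} [Finite σ] {M : DFA α σ}

lemma wordCount_acceptsFrom_le [Fintype α] (m : ℕ) (q : σ)
    (hM : ∀ p ∈ reachableFrom M q, (∃ v, v ∈ M.acceptsFrom p) →
      (returnLetters M p).Subsingleton) :
    wordCount (M.acceptsFrom q) m ≤
      (Fintype.card α * m + 1) ^ (reachableFrom M q).ncard := by
  induction m generalizing q with
  | zero => simpa using wordCount_zero_le_one (M.acceptsFrom q)
  | succ m ih =>
    by_cases hne : ∃ v, v ∈ M.acceptsFrom q
    swap
    · rw [wordCount_eq_zero_of_forall_notMem (not_exists.mp hne)]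
      exact Nat.zero_le _
    set B := Fintype.card α * m + 1 with hB
    obtain ⟨r, hr⟩ : ∃ r, (reachableFrom M q).ncard = r + 1 :=
      Nat.exists_eq_succ_of_ne_zero (Set.ncard_ne_zero_of_mem (self_mem_reachableFrom M q))
    have hstep (a : α) : wordCount (M.acceptsFrom (M.step q a)) m ≤
        B ^ (reachableFrom M (M.step q a)).ncard :=
      ih _ fun p hp ↦ hM p (reachableFrom_step_subset M q a hp)
    have hreturn (a : α) : (reachableFrom M (M.step q a)).ncard ≤ r + 1 := by
      rw [← hr]
      exact Set.ncard_le_ncard (reachableFrom_step_subset M q a)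
    have hleave (a : α) (ha : a ∉ returnLetters M q) :
        (reachableFrom M (M.step q a)).ncard ≤ r := by
      rw [← Nat.lt_succ_iff, ← Nat.add_one, ← hr]
      exact Set.ncard_lt_ncard (reachableFrom_step_ssubset M ha)
    calc wordCount (M.acceptsFrom q) (m + 1)
        = ∑ a, wordCount (M.acceptsFrom (M.step q a)) m := by
          simp only [wordCount_succ, leftQuotient_acceptsFrom_singleton]
      _ ≤ Fintype.card α * B ^ r + B ^ (r + 1) :=
          sum_le_card_mul_add_of_subsingleton (hM q (self_mem_reachableFrom M q) hne)
            (fun a ha ↦ (hstep a).trans (Nat.pow_le_pow_right (Nat.succ_pos _) (hleave a ha)))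
            (fun a _ ↦ (hstep a).trans (Nat.pow_le_pow_right (Nat.succ_pos _) (hreturn a)))
      _ = B ^ r * (Fintype.card α * (m + 1) + 1) := by rw [hB]; ring
      _ ≤ (Fintype.card α * (m + 1) + 1) ^ r * (Fintype.card α * (m + 1) + 1) := by
          rw [hB]
          gcongr
          exact m.le_succ
      _ = (Fintype.card α * (m + 1) + 1) ^ (reachableFrom M q).ncard := by rw [hr, pow_succ]

lemma exists_nontrivial_returnLetters_of_expGrowth [Finite α] {q : σ}
    (hexp : ExpGrowth (M.acceptsFrom q)) :
    ∃ p ∈ reachableFrom M q, (∃ v, v ∈ M.acceptsFrom p) ∧ (returnLetters M p).Nontrivial := by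
  cases nonempty_fintype α
  by_contra! hM
  exact not_expGrowth_of_polyGrowth
    (polyGrowth_of_wordCount_le fun m ↦ wordCount_acceptsFrom_le m q hM) hexp

end Growth

/-- If a language of exponential growth is accepted by a DFA with `n` states, then there
are words `s, t, u, v` with `|s| < n`, `|v| < n`, `|t| = |u| < 3n` and `t ≠ u` such that
`s·{t,u}*·v ⊆ L`. -/
theorem exp_growth_short_witnesses
    {α : Type} [Fintype α] {σ : Type} [Fintype σ] (n : ℕ) (hcard : Fintype.card σ = n)
    (M : DFA α σ) (L : Language α) (hacc : M.accepts = L) (hexp : ExpGrowth L) :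
    ∃ s t u v : List α, s.length < n ∧ v.length < n ∧
      t.length = u.length ∧ t.length < 3 * n ∧ t ≠ u ∧
      ({s} : Language α) * (({t} : Language α) + {u})∗ * {v} ≤ L := by
  subst hacc hcard
  obtain ⟨q, hreach, hcoreach, hbranch⟩ := exists_nontrivial_returnLetters_of_expGrowth hexp
  obtain ⟨s, hs, hslen⟩ := exists_short_mem_pathLanguage M hreach
  obtain ⟨v, hv, hvlen⟩ := exists_short_mem_acceptsFrom M hcoreach
  obtain ⟨t, ht, u, hu, hlen, htlen, hne⟩ :=
    exists_ne_mem_pathLanguage_of_nontrivial_returnLetters M hbranch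
  have hloops : ({t} : Language α) + {u} ≤ pathLanguage M q q :=
    Set.union_subset (Set.singleton_subset_iff.mpr ht) (Set.singleton_subset_iff.mpr hu)
  exact ⟨s, t, u, v, hslen, hvlen, hlen, by omega, hne, mul_kstar_mul_le_acceptsFrom M
    (Set.singleton_subset_iff.mpr hs) hloops (Set.singleton_subset_iff.mpr hv)⟩
end
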